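/- Let n ≥ 3, R > 0, and let 𝔹_R be the open ball of radius R in ℝⁿ. For x ∈ 𝔹_R, let 𝒦_{n,R}(x) be the smallest constant such that |∇u(x)| ≤ 𝒦_{n,R}(x)·‖g‖_{L^∞(∂𝔹_R)} for every u that is the Poisson integral over ∂𝔹_R of a boundary function g ∈ L^∞(∂𝔹_R). Then 𝒦_{n,R}(x) = [2^{n−2}(n−2) R^{n−1} / (π (R+|x|)^{n−1} (R−|x|))] · sup_{γ≥0} (1/√(1+γ²)) ∫₀^π sin^{n−3}φ dφ ∫₀^{π/2} G_n(θ, φ; |x|/R, γ) dθ, where G_n(θ, φ; r, γ) = |n γ sin 2θ cos φ + n cos 2θ + (n−2) r| · sin^{n−2}θ / [1 + ((1−r)/(1+r))² tan²θ]^{(n−2)/2}. -/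

import Mathlib

open MeasureTheory Real Filter Metric
open scoped Real RealInnerProductSpace

noncomputable section

/-- `Eu n` is the Euclidean space `ℝⁿ`. -/
abbrev Eu (n : ℕ) := EuclideanSpace ℝ (Fin n)

/-- `ω_n`: the surface area of the unit sphere `S^{n-1}` in `ℝⁿ`,
given by the classical formula `2 π^{n/2} / Γ(n/2)`. -/
def sphereArea (n : ℕ) : ℝ := 2 * π ^ ((n : ℝ) / 2) / Real.Gamma ((n : ℝ) / 2)

/-- Scaling map from the unit sphere onto the sphere of radius `R` in `ℝⁿ`. -/
def sphereScale (n : ℕ) (R : ℝ) (hR : 0 < R) (ω : Metric.sphere (0 : Eu n) 1) :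
    Metric.sphere (0 : Eu n) R :=
  ⟨R • (ω : Eu n), by
    have h1 : ‖(ω : Eu n)‖ = 1 := by simpa using ω.2
    simp [mem_sphere_zero_iff_norm, norm_smul, h1, abs_of_pos hR]⟩

/-- The surface measure `σ` on the sphere of radius `R` in `ℝⁿ`: the pushforward
under the scaling map of `R^{n-1}` times the surface measure of the unit sphere. -/
def sphereMeasureR (n : ℕ) (R : ℝ) (hR : 0 < R) : Measure (Metric.sphere (0 : Eu n) R) :=
  Measure.map (sphereScale n R hR) ((ENNReal.ofReal (R ^ (n - 1))) • (volume.toSphere))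

/-- The function `G_n(θ, φ; r, γ)` from the statement. -/
def Gfun (n : ℕ) (θ φ r γ : ℝ) : ℝ :=
  |(n : ℝ) * γ * Real.sin (2 * θ) * Real.cos φ + (n : ℝ) * Real.cos (2 * θ) +
      ((n : ℝ) - 2) * r| * Real.sin θ ^ (n - 2) /
    (1 + ((1 - r) / (1 + r)) ^ 2 * Real.tan θ ^ 2) ^ (((n : ℝ) - 2) / 2)

/-- The claimed value of the sharp coefficient `𝒦_{n,R}(x)` (with `ρ = |x|`). -/
def KcoefR (n : ℕ) (R ρ : ℝ) : ℝ :=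
  (2 ^ (n - 2) * ((n : ℝ) - 2) * R ^ (n - 1) / (π * (R + ρ) ^ (n - 1) * (R - ρ))) *
    ⨆ γ ∈ Set.Ici (0 : ℝ), (1 / Real.sqrt (1 + γ ^ 2)) *
      ∫ φ in (0:ℝ)..π, Real.sin φ ^ (n - 3) * ∫ θ in (0:ℝ)..(π / 2), Gfun n θ φ (ρ / R) γ

/-- The Poisson integral `u(x) = (1/(ωₙ R)) ∫_{∂𝔹_R} ((R²-|x|²)/|y-x|ⁿ) g(y) dσ_y`
of a boundary function `g ∈ L^∞(∂𝔹_R)`. -/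
def poissonBallR {n : ℕ} (R : ℝ) (hR : 0 < R)
    (g : Metric.sphere (0 : Eu n) R → ℝ) (x : Eu n) : ℝ :=
  (1 / (sphereArea n * R)) * ∫ y : Metric.sphere (0 : Eu n) R,
    ((R ^ 2 - ‖x‖ ^ 2) / ‖(y : Eu n) - x‖ ^ n) * g y ∂(sphereMeasureR n R hR)

/-!
Differentiating under the integral, the gradient of `u` at `x` is `∫ g(y) ∇ₓP(x, y) dσ`. Testing
against `g = sign ⟪∇ₓP(x, ·), v⟫` shows that the sharp constant is the supremum of
`∫ |⟪∇ₓP(x, y), v⟫| dσ / ‖v‖` over any dense set of directions `v`. For `x = ‖x‖ e`, the directions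
with `⟪e, v⟫ ≠ 0` are dense, and up to scaling they are `e + γ e'` with `e'` a unit vector
orthogonal to `e` and `γ ≥ 0`. The integrand then depends on `ω = y / R` only through `⟪e, ω⟫` and
`⟪e', ω⟫`, so slicing the sphere twice reduces the integral to one over two angles `ψ` and `φ`.
With `r = ‖x‖ / R`, the substitution `tan (ψ / 2) = (1 - r) / (1 + r) * tan θ` turns it into the
integral of `Gₙ`.
-/

open Module (finrank)
open scoped ENNReal

theorem sphereArea_pos {n : ℕ} (hn : 0 < n) : 0 < sphereArea n :=
  div_pos (by positivity) (Gamma_pos_of_pos (by positivity))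

theorem sphereArea_add_two {n : ℕ} (hn : 0 < n) :
    sphereArea (n + 2) = 2 * π / n * sphereArea n := by
  have hhalf : ((n + 2 : ℕ) : ℝ) / 2 = n / 2 + 1 := by push_cast; ring
  have := Gamma_pos_of_pos (by positivity : (0 : ℝ) < n / 2)
  rw [sphereArea, sphereArea, hhalf, Gamma_add_one (by positivity), rpow_add_one pi_pos.ne']
  field_simp

section UnitVectors

variable {E : Type*} [NormedAddCommGroup E] [InnerProductSpace ℝ E]

theorem finrank_orthogonal_span_unit {k : ℕ} (hE : finrank ℝ E = k + 1) {e : E} (he : ‖e‖ = 1) :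
    finrank ℝ (ℝ ∙ e)ᗮ = k :=
  have : Fact (finrank ℝ E = k + 1) := ⟨hE⟩
  Submodule.finrank_orthogonal_span_singleton (norm_ne_zero_iff.1 (he ▸ one_ne_zero))

theorem norm_cos_smul_add_sin_smul {u v : E} (hu : ‖u‖ = 1) (hv : ‖v‖ = 1) (huv : ⟪u, v⟫ = 0)
    (ψ : ℝ) : ‖cos ψ • u + sin ψ • v‖ = 1 := by
  rw [← sq_eq_sq₀ (norm_nonneg _) zero_le_one, norm_add_sq_real]
  simp [norm_smul, inner_smul_left, inner_smul_right, hu, hv, huv]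

end UnitVectors

section SphericalSlicing

theorem lintegral_upperHalfPlane_eq_polar {F : ℝ → ℝ → ℝ≥0∞}
    (hF : Measurable (Function.uncurry F)) :
    ∫⁻ b, ∫⁻ s in Set.Ioi (0 : ℝ), F b s =
      ∫⁻ ψ in Set.Ioo 0 π, ∫⁻ τ in Set.Ioi (0 : ℝ),
        ENNReal.ofReal τ * F (τ * cos ψ) (τ * sin ψ) := by
  set H : Set (ℝ × ℝ) := Set.univ ×ˢ Set.Ioi 0
  set T : Set (ℝ × ℝ) := Set.Ioi 0 ×ˢ Set.Ioo 0 π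
  have hH : MeasurableSet H := MeasurableSet.univ.prod measurableSet_Ioi
  have hT : MeasurableSet T := measurableSet_Ioi.prod measurableSet_Ioo
  have hTsub : T ⊆ polarCoord.target :=
    Set.prod_mono_right (Set.Ioo_subset_Ioo_left (by linarith [pi_pos]))
  have hmem : ∀ p ∈ polarCoord.target, (polarCoord.symm p ∈ H ↔ p ∈ T) := by
    rintro ⟨τ, ψ⟩ ⟨hτ, hψ⟩
    rw [Set.mem_Ioi] at hτ
    suffices 0 < sin ψ ↔ 0 < ψ by simpa [H, T, hτ, hψ.2] using this
    refine ⟨fun h ↦ ?_, fun h ↦ sin_pos_of_mem_Ioo ⟨h, hψ.2⟩⟩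
    by_contra! h'
    exact h.not_ge (sin_nonpos_of_nonpos_of_neg_pi_le h' hψ.1.le)
  have hpolar : Measurable fun p : ℝ × ℝ ↦
      ENNReal.ofReal p.1 * F (p.1 * cos p.2) (p.1 * sin p.2) :=
    (measurable_fst.ennreal_ofReal).mul
      (hF.comp (f := fun p : ℝ × ℝ ↦ (p.1 * cos p.2, p.1 * sin p.2)) (by fun_prop))
  calc ∫⁻ b, ∫⁻ s in Set.Ioi (0 : ℝ), F b s
      = ∫⁻ p, H.indicator (Function.uncurry F) p := by
        rw [lintegral_indicator hH, Measure.volume_eq_prod, setLIntegral_prod _ hF.aemeasurable]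
        simp [Function.uncurry]
    _ = ∫⁻ p in polarCoord.target,
          T.indicator (fun p ↦ ENNReal.ofReal p.1 * F (p.1 * cos p.2) (p.1 * sin p.2)) p := by
        rw [← lintegral_comp_polarCoord_symm]
        refine setLIntegral_congr_fun polarCoord.open_target.measurableSet fun p hp ↦ ?_
        by_cases hpT : p ∈ T
        · rw [Set.indicator_of_mem hpT, Set.indicator_of_mem ((hmem p hp).2 hpT)]
          rfl
        · rw [Set.indicator_of_notMem hpT, Set.indicator_of_notMem (mt (hmem p hp).1 hpT),
            smul_zero]
    _ = _ := by
        rw [setLIntegral_indicator hT, Set.inter_eq_left.2 hTsub, Measure.volume_eq_prod,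
          setLIntegral_prod_symm _ hpolar.aemeasurable]

theorem lintegral_Ioi_pow_mul_indicator_Iio_one (m : ℕ) :
    ∫⁻ r in Set.Ioi (0 : ℝ), ENNReal.ofReal (r ^ m) * (Set.Iio (1 : ℝ)).indicator 1 r =
      ENNReal.ofReal (1 / (m + 1)) := by
  have h := Measure.volumeIoiPow_apply_Iio m ⟨1, Set.mem_Ioi.2 one_pos⟩
  rw [one_pow] at h
  rw [← h, Measure.volumeIoiPow, withDensity_apply _ measurableSet_Iio,
    ← lintegral_indicator measurableSet_Iio,
    ← lintegral_subtype_comap measurableSet_Ioi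
      (fun r : ℝ ↦ ENNReal.ofReal (r ^ m) * (Set.Iio (1 : ℝ)).indicator 1 r)]
  refine lintegral_congr fun r ↦ ?_
  by_cases hr : (r : ℝ) < 1
  · simp [Set.indicator, hr, ← Subtype.coe_lt_coe]
  · simp [Set.indicator, hr, ← Subtype.coe_lt_coe]

section Normed

variable {E : Type*} [NormedAddCommGroup E] [NormedSpace ℝ E] [FiniteDimensional ℝ E]
  [MeasurableSpace E] [BorelSpace E]

theorem lintegral_eq_lintegral_toSphere [Nontrivial E] (μ : Measure E) [μ.IsAddHaarMeasure]
    {F : E → ℝ≥0∞} (hF : Measurable F) :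
    ∫⁻ x, F x ∂μ = ∫⁻ ω, ∫⁻ r in Set.Ioi (0 : ℝ),
      ENNReal.ofReal (r ^ (finrank ℝ E - 1)) * F (r • (ω : E)) ∂volume ∂μ.toSphere := by
  have polar_smul (x : ({0}ᶜ : Set E)) :
      ((homeomorphUnitSphereProd E x).2 : ℝ) • ((homeomorphUnitSphereProd E x).1 : E) = x := by
    rw [← homeomorphUnitSphereProd_symm_apply_coe, Homeomorph.symm_apply_apply]
  calc ∫⁻ x, F x ∂μ = ∫⁻ x : ({0}ᶜ : Set E), F x ∂μ.comap (↑) := by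
        rw [lintegral_subtype_comap (measurableSet_singleton _).compl F, restrict_compl_singleton]
    _ = ∫⁻ p : sphere (0 : E) 1 × Set.Ioi (0 : ℝ), F ((p.2 : ℝ) • (p.1 : E))
          ∂μ.toSphere.prod (.volumeIoiPow (finrank ℝ E - 1)) := by
        rw [← μ.measurePreserving_homeomorphUnitSphereProd.lintegral_comp_emb
          (Homeomorph.measurableEmbedding _)]
        simp only [polar_smul]
    _ = _ := by
        rw [lintegral_prod _ (by fun_prop)]
        refine lintegral_congr fun ω ↦ ?_
        rw [Measure.volumeIoiPow, lintegral_withDensity_eq_lintegral_mul _ (by fun_prop)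
          (by fun_prop)]
        exact lintegral_subtype_comap measurableSet_Ioi
          (fun r : ℝ ↦ ENNReal.ofReal (r ^ (finrank ℝ E - 1)) * F (r • (ω : E)))

end Normed

variable {E : Type*} [NormedAddCommGroup E] [InnerProductSpace ℝ E] [FiniteDimensional ℝ E]
  [MeasurableSpace E] [BorelSpace E]

theorem lintegral_eq_lintegral_lintegral_orthogonal {e : E} (he : ‖e‖ = 1)
    {F : E → ℝ≥0∞} (hF : Measurable F) :
    ∫⁻ x, F x = ∫⁻ a : ℝ, ∫⁻ z : (ℝ ∙ e)ᗮ, F (a • e + z) := by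
  set K := ℝ ∙ e
  have hdecomp : MeasurePreserving fun p : K × Kᗮ ↦ (p.1 + p.2 : E) := by
    have h := K.orthogonalDecomposition.symm.measurePreserving.comp
      (WithLp.volume_preserving_toLp K Kᗮ)
    convert h using 1
    ext p
    exact (DFunLike.congr_fun K.coe_orthogonalDecomposition_symm (WithLp.toLp 2 p)).symm
  have hline := (LinearIsometryEquiv.toSpanUnitSingleton (𝕜 := ℝ) e he).measurePreserving
  have hFadd : Measurable fun p : K × Kᗮ ↦ F (p.1 + p.2) := hF.comp hdecomp.measurable
  rw [← hdecomp.lintegral_comp hF, Measure.volume_eq_prod, lintegral_prod _ hFadd.aemeasurable,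
    ← hline.lintegral_comp hFadd.lintegral_prod_right']
  simp

theorem lintegral_eq_lintegral_slice {k : ℕ} (hE : finrank ℝ E = k + 2) {e : E} (he : ‖e‖ = 1)
    {F : E → ℝ≥0∞} (hF : Measurable F) :
    ∫⁻ x, F x =
      ∫⁻ ψ in Set.Ioo 0 π, ∫⁻ ζ : sphere (0 : (ℝ ∙ e)ᗮ) 1, ∫⁻ r in Set.Ioi (0 : ℝ),
        ENNReal.ofReal (r ^ (k + 1)) * (ENNReal.ofReal (sin ψ ^ k) *
          F (r • (cos ψ • e + sin ψ • (ζ : E))))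
        ∂volume ∂(volume : Measure (ℝ ∙ e)ᗮ).toSphere := by
  have hfinrank := finrank_orthogonal_span_unit hE he
  set W := (ℝ ∙ e)ᗮ
  have : Nontrivial W := Module.nontrivial_of_finrank_pos (R := ℝ) (by omega)
  set σ := (volume : Measure W).toSphere
  set G : ℝ → sphere (0 : W) 1 → ℝ → ℝ≥0∞ := fun a ζ s ↦
    ENNReal.ofReal (s ^ k) * F (a • e + s • (ζ : E))
  calc ∫⁻ x, F x
      = ∫⁻ a, ∫⁻ ζ, ∫⁻ s in Set.Ioi (0 : ℝ), G a ζ s ∂volume ∂σ ∂volume := by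
        rw [lintegral_eq_lintegral_lintegral_orthogonal he hF]
        refine lintegral_congr fun a ↦ ?_
        rw [lintegral_eq_lintegral_toSphere volume (by fun_prop), hfinrank]
        rfl
    _ = ∫⁻ ζ, ∫⁻ a, ∫⁻ s in Set.Ioi (0 : ℝ), G a ζ s ∂volume ∂volume ∂σ :=
        lintegral_lintegral_swap (by fun_prop)
    _ = ∫⁻ ζ, ∫⁻ ψ in Set.Ioo 0 π, ∫⁻ r in Set.Ioi (0 : ℝ),
          ENNReal.ofReal r * G (r * cos ψ) ζ (r * sin ψ) ∂volume ∂volume ∂σ :=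
        lintegral_congr fun ζ ↦ lintegral_upperHalfPlane_eq_polar (F := (G · ζ ·)) (by fun_prop)
    _ = ∫⁻ ψ in Set.Ioo 0 π, ∫⁻ ζ, ∫⁻ r in Set.Ioi (0 : ℝ),
          ENNReal.ofReal r * G (r * cos ψ) ζ (r * sin ψ) ∂volume ∂σ ∂volume :=
        lintegral_lintegral_swap (by fun_prop)
    _ = _ := by
        refine lintegral_congr fun ψ ↦ lintegral_congr fun ζ ↦
          setLIntegral_congr_fun measurableSet_Ioi fun r (hr : 0 < r) ↦ ?_
        simp only [G, smul_add, smul_smul, ← mul_assoc]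
        rw [← ENNReal.ofReal_mul hr.le, ← ENNReal.ofReal_mul (by positivity)]
        congr 2
        ring

theorem lintegral_indicator_norm_mul_comp_normalize [Nontrivial E] {f : E → ℝ≥0∞}
    (hf : Measurable f) :
    ∫⁻ x : E, (Set.Iio (1 : ℝ)).indicator 1 ‖x‖ * f (‖x‖⁻¹ • x) =
      ENNReal.ofReal (1 / finrank ℝ E) * ∫⁻ ω, f ω ∂(volume : Measure E).toSphere := by
  have hind : Measurable ((Set.Iio (1 : ℝ)).indicator (1 : ℝ → ℝ≥0∞)) :=
    measurable_one.indicator measurableSet_Iio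
  have hdim : ((finrank ℝ E - 1 : ℕ) : ℝ) + 1 = finrank ℝ E := by
    exact_mod_cast Nat.sub_add_cancel (Module.finrank_pos (R := ℝ) (M := E))
  rw [lintegral_eq_lintegral_toSphere volume (by fun_prop), ← hdim,
    ← lintegral_Ioi_pow_mul_indicator_Iio_one, ← lintegral_const_mul _ (by fun_prop)]
  refine lintegral_congr fun ω ↦ ?_
  rw [← lintegral_mul_const _ (by fun_prop)]
  refine setLIntegral_congr_fun measurableSet_Ioi fun r (hr : 0 < r) ↦ ?_
  have hnorm : ‖r • (ω : E)‖ = r := by simp [norm_smul, hr.le]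
  simp only [hnorm, inv_smul_smul₀ hr.ne', mul_assoc]

theorem lintegral_toSphere_eq_lintegral_slice {k : ℕ} (hE : finrank ℝ E = k + 2) {e : E}
    (he : ‖e‖ = 1) {f : E → ℝ≥0∞} (hf : Measurable f) :
    ∫⁻ ω, f ω ∂(volume : Measure E).toSphere =
      ∫⁻ ψ in Set.Ioo 0 π, ∫⁻ ζ : sphere (0 : (ℝ ∙ e)ᗮ) 1,
        ENNReal.ofReal (sin ψ ^ k) * f (cos ψ • e + sin ψ • (ζ : E))
          ∂(volume : Measure (ℝ ∙ e)ᗮ).toSphere := by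
  have : Nontrivial E := Module.nontrivial_of_finrank_pos (R := ℝ) (by omega)
  have hind : Measurable ((Set.Iio (1 : ℝ)).indicator (1 : ℝ → ℝ≥0∞)) :=
    measurable_one.indicator measurableSet_Iio
  -- Integrate over the unit ball; both sides acquire the same radial factor `1 / (k + 2)`.
  have hball := lintegral_indicator_norm_mul_comp_normalize hf
  rw [lintegral_eq_lintegral_slice hE he (by fun_prop), hE] at hball
  have hradial : ENNReal.ofReal (1 / (k + 2 : ℕ)) =
      ∫⁻ r in Set.Ioi (0 : ℝ), ENNReal.ofReal (r ^ (k + 1)) * (Set.Iio (1 : ℝ)).indicator 1 r := by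
    rw [lintegral_Ioi_pow_mul_indicator_Iio_one]
    push_cast
    ring_nf
  have hpos : ENNReal.ofReal (1 / (k + 2 : ℕ)) ≠ 0 := by positivity
  refine (ENNReal.mul_right_inj hpos ENNReal.ofReal_ne_top).1 (hball.symm.trans ?_)
  rw [← lintegral_const_mul _ (by fun_prop)]
  refine lintegral_congr fun ψ ↦ ?_
  rw [← lintegral_const_mul _ (by fun_prop), hradial]
  refine lintegral_congr fun ζ ↦ ?_
  rw [← lintegral_mul_const _ (by fun_prop)]
  refine setLIntegral_congr_fun measurableSet_Ioi fun r (hr : 0 < r) ↦ ?_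
  have hnorm : ‖r • (cos ψ • e + sin ψ • (ζ : E))‖ = r := by
    have horth : ⟪e, (ζ : E)⟫ = 0 :=
      Submodule.mem_orthogonal_singleton_iff_inner_right.1 ζ.1.2
    have hζ : ‖(ζ : E)‖ = 1 := norm_eq_of_mem_sphere ζ
    rw [norm_smul, norm_cos_smul_add_sin_smul he hζ horth, mul_one, norm_of_nonneg hr.le]
  simp only [hnorm, inv_smul_smul₀ hr.ne']
  ring

theorem toSphere_univ_eq_ofReal_sphereArea [Nontrivial E] :
    (volume : Measure E).toSphere Set.univ = ENNReal.ofReal (sphereArea (finrank ℝ E)) := by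
  have hd : (0 : ℝ) < finrank ℝ E := by exact_mod_cast Module.finrank_pos (R := ℝ) (M := E)
  have hsqrt : √π ^ finrank ℝ E = π ^ ((finrank ℝ E : ℝ) / 2) := by
    rw [sqrt_eq_rpow, ← rpow_natCast, ← rpow_mul pi_nonneg]
    ring_nf
  rw [Measure.toSphere_apply_univ, InnerProductSpace.volume_ball, ENNReal.ofReal_one, one_pow,
    one_mul, ← ENNReal.ofReal_natCast, ← ENNReal.ofReal_mul hd.le, hsqrt,
    Gamma_add_one (by positivity), sphereArea]
  congr 1
  field_simp

theorem lintegral_toSphere_inner {k : ℕ} (hE : finrank ℝ E = k + 2) {e : E} (he : ‖e‖ = 1)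
    {f : ℝ → ℝ≥0∞} (hf : Measurable f) :
    ∫⁻ ω : sphere (0 : E) 1, f ⟪e, (ω : E)⟫ ∂(volume : Measure E).toSphere =
      ENNReal.ofReal (sphereArea (k + 1)) *
        ∫⁻ ψ in Set.Ioo 0 π, ENNReal.ofReal (sin ψ ^ k) * f (cos ψ) := by
  have hfinrank := finrank_orthogonal_span_unit hE he
  have : Nontrivial (ℝ ∙ e)ᗮ := Module.nontrivial_of_finrank_pos (R := ℝ) (by omega)
  rw [lintegral_toSphere_eq_lintegral_slice hE he (f := fun x ↦ f ⟪e, x⟫) (by fun_prop),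
    ← lintegral_const_mul _ (by fun_prop)]
  refine lintegral_congr fun ψ ↦ ?_
  have hinner (ζ : sphere (0 : (ℝ ∙ e)ᗮ) 1) : ⟪e, cos ψ • e + sin ψ • (ζ : E)⟫ = cos ψ := by
    have horth : ⟪e, (ζ : E)⟫ = 0 := Submodule.mem_orthogonal_singleton_iff_inner_right.1 ζ.1.2
    simp [inner_add_right, inner_smul_right, horth, he]
  simp only [hinner, lintegral_const, toSphere_univ_eq_ofReal_sphereArea, hfinrank, mul_comm]

theorem lintegral_toSphere_inner_inner {k : ℕ} (hE : finrank ℝ E = k + 3) {e e' : E}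
    (he : ‖e‖ = 1) (he' : ‖e'‖ = 1) (hee' : ⟪e, e'⟫ = 0) {f : ℝ → ℝ → ℝ≥0∞}
    (hf : Measurable (Function.uncurry f)) :
    ∫⁻ ω : sphere (0 : E) 1, f ⟪e, (ω : E)⟫ ⟪e', (ω : E)⟫ ∂(volume : Measure E).toSphere =
      ENNReal.ofReal (sphereArea (k + 1)) *
        ∫⁻ φ in Set.Ioo 0 π, ∫⁻ ψ in Set.Ioo 0 π,
          ENNReal.ofReal (sin φ ^ k) *
            (ENNReal.ofReal (sin ψ ^ (k + 1)) * f (cos ψ) (sin ψ * cos φ)) := by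
  have hfinrank := finrank_orthogonal_span_unit hE he
  let w : (ℝ ∙ e)ᗮ := ⟨e', Submodule.mem_orthogonal_singleton_iff_inner_right.2 hee'⟩
  have hw : ‖w‖ = 1 := he'
  rw [lintegral_toSphere_eq_lintegral_slice hE he (f := fun x ↦ f ⟪e, x⟫ ⟪e', x⟫) (by fun_prop),
    lintegral_lintegral_swap (μ := volume.restrict (Set.Ioo 0 π))
      (ν := volume.restrict (Set.Ioo 0 π)) (by fun_prop),
    ← lintegral_const_mul _ (by fun_prop)]
  refine lintegral_congr fun ψ ↦ ?_
  rw [← lintegral_toSphere_inner hfinrank hw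
    (f := fun b ↦ ENNReal.ofReal (sin ψ ^ (k + 1)) * f (cos ψ) (sin ψ * b)) (by fun_prop)]
  refine lintegral_congr fun ζ ↦ ?_
  have horth : ⟪e, (ζ : E)⟫ = 0 := Submodule.mem_orthogonal_singleton_iff_inner_right.1 ζ.1.2
  simp [inner_add_right, inner_smul_right, horth, he, hee', w, real_inner_comm]

end SphericalSlicing

section DilatedAngle

/-- The angle `ψ` obtained from `θ` by `tan (ψ / 2) = κ * tan θ`. For `κ = (1 - r) / (1 + r)` it
turns `1 - 2 * r * cos ψ + r ^ 2`, the squared distance occurring in the Poisson kernel, into a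
multiple of `(1 + κ ^ 2 * tan θ ^ 2)⁻¹`. -/
def dilatedAngle (κ θ : ℝ) : ℝ := 2 * arctan (κ * tan θ)

variable {κ θ : ℝ}

theorem cos_sq_add_mul_sin_sq_pos (hκ : 0 < κ) (θ : ℝ) : 0 < cos θ ^ 2 + (κ * sin θ) ^ 2 := by
  rcases eq_or_ne (cos θ) 0 with hcos | hcos
  · have hsin : sin θ ^ 2 = 1 := by simpa [hcos] using sin_sq_add_cos_sq θ
    rw [hcos, mul_pow, hsin]
    positivity
  · positivity

theorem one_add_mul_tan_sq (hθ : cos θ ≠ 0) :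
    1 + (κ * tan θ) ^ 2 = (cos θ ^ 2 + (κ * sin θ) ^ 2) / cos θ ^ 2 := by
  rw [tan_eq_sin_div_cos]
  field_simp

theorem cos_dilatedAngle (hκ : 0 < κ) (hθ : cos θ ≠ 0) :
    cos (dilatedAngle κ θ) =
      (cos θ ^ 2 - (κ * sin θ) ^ 2) / (cos θ ^ 2 + (κ * sin θ) ^ 2) := by
  have := cos_sq_add_mul_sin_sq_pos hκ θ
  rw [dilatedAngle, cos_two_mul, cos_sq_arctan, one_add_mul_tan_sq hθ]
  field_simp
  ring

theorem sin_dilatedAngle (hκ : 0 < κ) (hθ : cos θ ≠ 0) :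
    sin (dilatedAngle κ θ) =
      κ * sin (2 * θ) / (cos θ ^ 2 + (κ * sin θ) ^ 2) := by
  have := cos_sq_add_mul_sin_sq_pos hκ θ
  have hsqrt : sin (arctan (κ * tan θ)) * cos (arctan (κ * tan θ)) =
      κ * tan θ / (1 + (κ * tan θ) ^ 2) := by
    rw [sin_arctan, cos_arctan, div_mul_div_comm, mul_one, mul_self_sqrt (by positivity)]
  rw [dilatedAngle, sin_two_mul, mul_assoc, hsqrt, one_add_mul_tan_sq hθ, tan_eq_sin_div_cos,
    sin_two_mul]
  field_simp

theorem hasDerivAt_dilatedAngle (hκ : 0 < κ) (hθ : cos θ ≠ 0) :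
    HasDerivAt (dilatedAngle κ) (2 * κ / (cos θ ^ 2 + (κ * sin θ) ^ 2)) θ := by
  have := cos_sq_add_mul_sin_sq_pos hκ θ
  refine ((((hasDerivAt_tan hθ).const_mul κ).arctan).const_mul 2).congr_deriv ?_
  rw [one_add_mul_tan_sq hθ]
  field_simp

theorem injOn_dilatedAngle (hκ : κ ≠ 0) :
    Set.InjOn (dilatedAngle κ) (Set.Ioo (-(π / 2)) (π / 2)) := by
  intro θ hθ θ' hθ' h
  have harctan := mul_left_cancel₀ two_ne_zero h
  exact injOn_tan hθ hθ' (mul_left_cancel₀ hκ (arctan_injective harctan))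

theorem image_dilatedAngle (hκ : 0 < κ) :
    dilatedAngle κ '' Set.Ioo 0 (π / 2) = Set.Ioo 0 π := by
  ext ψ
  constructor
  · rintro ⟨θ, hθ, rfl⟩
    have htan : 0 < tan θ := tan_pos_of_pos_of_lt_pi_div_two hθ.1 hθ.2
    have hpos : 0 < arctan (κ * tan θ) := arctan_pos.2 (by positivity)
    have hlt := arctan_lt_pi_div_two (κ * tan θ)
    constructor <;> (unfold dilatedAngle; linarith)
  · rintro ⟨hψ0, hψπ⟩
    have htan : 0 < tan (ψ / 2) :=
      tan_pos_of_pos_of_lt_pi_div_two (by linarith) (by linarith)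
    refine ⟨arctan (tan (ψ / 2) / κ), ⟨arctan_pos.2 (by positivity), arctan_lt_pi_div_two _⟩, ?_⟩
    rw [dilatedAngle, tan_arctan, mul_div_cancel₀ _ hκ.ne',
      arctan_tan (by linarith [pi_pos]) (by linarith), mul_div_cancel₀ _ two_ne_zero]

theorem cos_ne_zero_of_mem_Ioo (hθ : θ ∈ Set.Ioo 0 (π / 2)) : cos θ ≠ 0 :=
  (cos_pos_of_mem_Ioo ⟨by linarith [hθ.1, pi_pos], hθ.2⟩).ne'

theorem setLIntegral_Ioo_zero_pi_eq_dilatedAngle (hκ : 0 < κ) (g : ℝ → ℝ≥0∞) :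
    ∫⁻ ψ in Set.Ioo 0 π, g ψ =
      ∫⁻ θ in Set.Ioo 0 (π / 2),
        ENNReal.ofReal (2 * κ / (cos θ ^ 2 + (κ * sin θ) ^ 2)) * g (dilatedAngle κ θ) := by
  have hsub : Set.Ioo 0 (π / 2) ⊆ Set.Ioo (-(π / 2)) (π / 2) :=
    Set.Ioo_subset_Ioo_left (by linarith [pi_pos])
  rw [← image_dilatedAngle hκ, lintegral_image_eq_lintegral_abs_deriv_mul measurableSet_Ioo
    (fun θ hθ ↦ (hasDerivAt_dilatedAngle hκ (cos_ne_zero_of_mem_Ioo hθ)).hasDerivWithinAt)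
    ((injOn_dilatedAngle hκ.ne').mono hsub)]
  refine lintegral_congr fun θ ↦ ?_
  rw [abs_of_nonneg (by positivity)]

end DilatedAngle

section AngularIntegral

variable {r θ : ℝ}

theorem sq_dist_dilatedAngle (hr₀ : 0 ≤ r) (hr₁ : r < 1) (hθ : cos θ ≠ 0) :
    1 - 2 * r * cos (dilatedAngle ((1 - r) / (1 + r)) θ) + r ^ 2 =
      (1 - r) ^ 2 / (cos θ ^ 2 + ((1 - r) / (1 + r) * sin θ) ^ 2) := by
  have h1r : 0 < 1 - r := by linarith
  have hκ : 0 < (1 - r) / (1 + r) := by positivity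
  have := cos_sq_add_mul_sin_sq_pos hκ θ
  rw [cos_dilatedAngle hκ hθ]
  generalize hQ : (1 - r) / (1 + r) = κ at *
  field_simp
  have hκr : κ * (1 + r) = 1 - r := by rw [← hQ]; field_simp
  linear_combination (κ * (1 + r) + (1 - r)) * sin θ ^ 2 * hκr + (1 - r) ^ 2 * sin_sq_add_cos_sq θ

theorem cos_dilatedAngle_sub_div_sq_dist (hr₀ : 0 ≤ r) (hr₁ : r < 1) (hθ : cos θ ≠ 0) :
    (1 - r ^ 2) * (cos (dilatedAngle ((1 - r) / (1 + r)) θ) - r) /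
      (1 - 2 * r * cos (dilatedAngle ((1 - r) / (1 + r)) θ) + r ^ 2) = cos (2 * θ) + r := by
  have h1r : 0 < 1 - r := by linarith
  have hκ : 0 < (1 - r) / (1 + r) := by positivity
  have := cos_sq_add_mul_sin_sq_pos hκ θ
  rw [sq_dist_dilatedAngle hr₀ hr₁ hθ, cos_dilatedAngle hκ hθ, cos_two_mul]
  rw [div_div_eq_mul_div, div_eq_iff (by positivity)]
  field_simp
  linear_combination -(1 - r) * (1 - r ^ 2) ^ 2 * sin_sq_add_cos_sq θ

theorem sin_dilatedAngle_div_sq_dist (hr₀ : 0 ≤ r) (hr₁ : r < 1) (hθ : cos θ ≠ 0) :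
    (1 - r ^ 2) * sin (dilatedAngle ((1 - r) / (1 + r)) θ) /
      (1 - 2 * r * cos (dilatedAngle ((1 - r) / (1 + r)) θ) + r ^ 2) = sin (2 * θ) := by
  have h1r : 0 < 1 - r := by linarith
  have hκ : 0 < (1 - r) / (1 + r) := by positivity
  have := cos_sq_add_mul_sin_sq_pos hκ θ
  rw [sq_dist_dilatedAngle hr₀ hr₁ hθ, sin_dilatedAngle hκ hθ]
  field_simp
  ring

/-- The derivative at `r • e` in the direction `e + γ • e'` of the Poisson kernel of the unit ball
of `ℝⁿ` with pole `ω`, for orthonormal `e, e'` and `a = ⟪e, ω⟫`, `b = ⟪e', ω⟫`. -/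
def poissonKernelSlope (n : ℕ) (r γ a b : ℝ) : ℝ :=
  (-2 * r + n * (1 - r ^ 2) * (a - r + γ * b) / (1 - 2 * r * a + r ^ 2)) /
    √(1 - 2 * r * a + r ^ 2) ^ n

theorem Gfun_eq_of_mem_Ioo (k : ℕ) (r γ φ : ℝ) (hθ : θ ∈ Set.Ioo 0 (π / 2)) :
    Gfun (k + 2) θ φ r γ =
      |(k + 2 : ℕ) * γ * sin (2 * θ) * cos φ + (k + 2 : ℕ) * cos (2 * θ) + k * r| *
        (sin (2 * θ) / 2) ^ k / √(cos θ ^ 2 + ((1 - r) / (1 + r) * sin θ) ^ 2) ^ k := by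
  have hcos : 0 < cos θ := cos_pos_of_mem_Ioo ⟨by linarith [hθ.1, pi_pos], hθ.2⟩
  have hdenom : (1 + ((1 - r) / (1 + r)) ^ 2 * tan θ ^ 2) ^ (((k + 2 : ℕ) - 2 : ℝ) / 2) =
      (√(cos θ ^ 2 + ((1 - r) / (1 + r) * sin θ) ^ 2) / cos θ) ^ k := by
    rw [← mul_pow, one_add_mul_tan_sq hcos.ne', ← sqrt_sq hcos.le, ← sqrt_div (by positivity),
      sqrt_sq hcos.le, sqrt_eq_rpow, ← rpow_mul_natCast (by positivity)]
    push_cast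
    ring_nf
  have hhalf : sin (2 * θ) / 2 = sin θ * cos θ := by rw [sin_two_mul]; ring
  have hcast : ((k + 2 : ℕ) : ℝ) - 2 = k := by push_cast; ring
  rw [Gfun, hdenom, hcast, Nat.add_sub_cancel, hhalf, div_pow]
  field_simp
  ring

theorem deriv_dilatedAngle_mul_poissonKernelSlope (k : ℕ) (hr₀ : 0 ≤ r) (hr₁ : r < 1) (γ φ : ℝ)
    (hθ : θ ∈ Set.Ioo 0 (π / 2)) {κ ψ : ℝ} (hκ : κ = (1 - r) / (1 + r))
    (hψ : ψ = dilatedAngle κ θ) :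
    2 * κ / (cos θ ^ 2 + (κ * sin θ) ^ 2) *
        (sin ψ ^ k * |poissonKernelSlope (k + 2) r γ (cos ψ) (sin ψ * cos φ)|) =
      2 ^ (k + 1) / ((1 - r) * (1 + r) ^ (k + 1)) * Gfun (k + 2) θ φ r γ := by
  have hcos := cos_ne_zero_of_mem_Ioo hθ
  have h1r : 0 < 1 - r := by linarith
  have hκ₀ : 0 < κ := hκ ▸ by positivity
  have hQ := cos_sq_add_mul_sin_sq_pos hκ₀ θ
  have hdist : 1 - 2 * r * cos ψ + r ^ 2 = (1 - r) ^ 2 / (cos θ ^ 2 + (κ * sin θ) ^ 2) := by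
    rw [hψ, hκ, sq_dist_dilatedAngle hr₀ hr₁ hcos]
  have hnum : -2 * r + (k + 2 : ℕ) * (1 - r ^ 2) * (cos ψ - r + γ * (sin ψ * cos φ)) /
        (1 - 2 * r * cos ψ + r ^ 2) =
      (k + 2 : ℕ) * γ * sin (2 * θ) * cos φ + (k + 2 : ℕ) * cos (2 * θ) + k * r := by
    have hcosψ := cos_dilatedAngle_sub_div_sq_dist hr₀ hr₁ hcos
    have hsinψ := sin_dilatedAngle_div_sq_dist hr₀ hr₁ hcos
    rw [← hκ, ← hψ] at hcosψ hsinψ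
    push_cast
    linear_combination (k + 2 : ℝ) * hcosψ + (k + 2 : ℝ) * γ * cos φ * hsinψ
  rw [poissonKernelSlope, hnum, hdist, abs_div, Gfun_eq_of_mem_Ioo k r γ φ hθ, ← hκ,
    sqrt_div (by positivity), sqrt_sq h1r.le, hψ, sin_dilatedAngle hκ₀ hcos]
  generalize |(k + 2 : ℕ) * γ * sin (2 * θ) * cos φ + (k + 2 : ℕ) * cos (2 * θ) + k * r| = X
  obtain ⟨w, hw, hwQ⟩ : ∃ w, 0 < w ∧ cos θ ^ 2 + (κ * sin θ) ^ 2 = w ^ 2 :=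
    ⟨_, sqrt_pos.2 hQ, (sq_sqrt hQ.le).symm⟩
  rw [hwQ, sqrt_sq hw.le, abs_of_pos (by positivity), hκ]
  simp only [div_pow, mul_pow]
  field_simp
  ring

/-- The double integral over the angles `φ` and `θ` in the definition of `KcoefR`. -/
def angularIntegral (n : ℕ) (r γ : ℝ) : ℝ :=
  ∫ φ in (0 : ℝ)..π, sin φ ^ (n - 3) * ∫ θ in (0 : ℝ)..(π / 2), Gfun n θ φ r γ

theorem Gfun_nonneg (n : ℕ) (φ r γ : ℝ) (hθ : θ ∈ Set.Icc 0 (π / 2)) : 0 ≤ Gfun n θ φ r γ := by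
  have hsin : 0 ≤ sin θ := sin_nonneg_of_nonneg_of_le_pi hθ.1 (by linarith [hθ.2, pi_pos])
  unfold Gfun
  positivity

theorem intervalIntegral_Gfun_nonneg (n : ℕ) (φ r γ : ℝ) :
    0 ≤ ∫ θ in (0 : ℝ)..(π / 2), Gfun n θ φ r γ :=
  intervalIntegral.integral_nonneg pi_div_two_pos.le fun _ hθ ↦ Gfun_nonneg _ _ _ _ hθ

theorem angularIntegral_nonneg (n : ℕ) (r γ : ℝ) : 0 ≤ angularIntegral n r γ :=
  intervalIntegral.integral_nonneg pi_nonneg fun _ hφ ↦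
    mul_nonneg (pow_nonneg (sin_nonneg_of_mem_Icc hφ) _) (intervalIntegral_Gfun_nonneg _ _ _ _)

theorem ofReal_intervalIntegral_eq_setLIntegral_Ioo {a b : ℝ} (hab : a ≤ b) {f : ℝ → ℝ}
    (hf : IntegrableOn f (Set.Ioo a b)) (hf₀ : ∀ x ∈ Set.Ioo a b, 0 ≤ f x) :
    ENNReal.ofReal (∫ x in a..b, f x) = ∫⁻ x in Set.Ioo a b, ENNReal.ofReal (f x) := by
  rw [intervalIntegral.integral_of_le hab, integral_Ioc_eq_integral_Ioo,
    ofReal_integral_eq_lintegral_ofReal hf (ae_restrict_of_forall_mem measurableSet_Ioo hf₀)]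

theorem ofReal_angularIntegral (k : ℕ) (hr₀ : 0 ≤ r) (hr₁ : r < 1) (γ : ℝ) :
    ENNReal.ofReal (angularIntegral (k + 3) r γ) =
      ∫⁻ φ in Set.Ioo 0 π, ∫⁻ θ in Set.Ioo 0 (π / 2),
        ENNReal.ofReal (sin φ ^ k) * ENNReal.ofReal (Gfun (k + 3) θ φ r γ) := by
  have hκ : 0 < (1 - r) / (1 + r) := div_pos (by linarith) (by linarith)
  obtain ⟨G, hG, hGfun⟩ : ∃ G : ℝ → ℝ → ℝ, Continuous (Function.uncurry G) ∧
      ∀ φ, Set.EqOn (G φ) (Gfun (k + 3) · φ r γ) (Set.Ioo 0 (π / 2)) := by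
    refine ⟨_, ?_, fun φ θ hθ ↦ (Gfun_eq_of_mem_Ioo (k + 1) r γ φ hθ).symm⟩
    exact Continuous.div (by fun_prop) (by fun_prop) fun p ↦
      (pow_pos (sqrt_pos.2 (cos_sq_add_mul_sin_sq_pos hκ p.2)) _).ne'
  have hinner (φ : ℝ) : ∫ θ in (0 : ℝ)..(π / 2), Gfun (k + 3) θ φ r γ =
      ∫ θ in (0 : ℝ)..(π / 2), G φ θ := by
    simp only [intervalIntegral.integral_of_le pi_div_two_pos.le, integral_Ioc_eq_integral_Ioo]
    exact setIntegral_congr_fun measurableSet_Ioo fun θ hθ ↦ (hGfun φ hθ).symm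
  have houter : Continuous fun φ ↦ sin φ ^ k * ∫ θ in (0 : ℝ)..(π / 2), Gfun (k + 3) θ φ r γ := by
    simp only [hinner]
    exact (by fun_prop : Continuous fun φ ↦ sin φ ^ k).mul
      (intervalIntegral.continuous_parametric_intervalIntegral_of_continuous' hG _ _)
  rw [angularIntegral, Nat.add_sub_cancel, ofReal_intervalIntegral_eq_setLIntegral_Ioo pi_nonneg
    (houter.integrableOn_Icc.mono_set Set.Ioo_subset_Icc_self) fun φ hφ ↦
      mul_nonneg (pow_nonneg (sin_pos_of_mem_Ioo hφ).le _) (intervalIntegral_Gfun_nonneg _ _ _ _)]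
  refine setLIntegral_congr_fun measurableSet_Ioo fun φ hφ ↦ ?_
  rw [ENNReal.ofReal_mul (pow_nonneg (sin_pos_of_mem_Ioo hφ).le _),
    ofReal_intervalIntegral_eq_setLIntegral_Ioo pi_div_two_pos.le ?_ fun θ hθ ↦
      Gfun_nonneg _ _ _ _ (Set.Ioo_subset_Icc_self hθ),
    lintegral_const_mul' _ _ ENNReal.ofReal_ne_top]
  exact ((hG.comp (by fun_prop : Continuous (φ, ·))).integrableOn_Icc.mono_set
    Set.Ioo_subset_Icc_self).congr_fun (hGfun φ) measurableSet_Ioo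

theorem measurable_poissonKernelSlope (n : ℕ) (r γ : ℝ) :
    Measurable (Function.uncurry (poissonKernelSlope n r γ)) := by
  unfold poissonKernelSlope
  fun_prop

section SphereIntegral

variable {E : Type*} [NormedAddCommGroup E] [InnerProductSpace ℝ E] [FiniteDimensional ℝ E]
  [MeasurableSpace E] [BorelSpace E]

theorem lintegral_toSphere_abs_poissonKernelSlope {k : ℕ}
    (hE : finrank ℝ E = k + 3) {e e' : E} (he : ‖e‖ = 1) (he' : ‖e'‖ = 1) (hee' : ⟪e, e'⟫ = 0)
    (hr₀ : 0 ≤ r) (hr₁ : r < 1) (γ : ℝ) :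
    ∫⁻ ω : sphere (0 : E) 1, ENNReal.ofReal |poissonKernelSlope (k + 3) r γ ⟪e, ω⟫ ⟪e', ω⟫|
        ∂(volume : Measure E).toSphere =
      ENNReal.ofReal (sphereArea (k + 1)) *
        (ENNReal.ofReal (2 ^ (k + 2) / ((1 - r) * (1 + r) ^ (k + 2))) *
          ENNReal.ofReal (angularIntegral (k + 3) r γ)) := by
  have : 0 < 1 - r := by linarith
  have hslope : Measurable (Function.uncurry fun a b ↦
      ENNReal.ofReal |poissonKernelSlope (k + 3) r γ a b|) :=
    ((measurable_poissonKernelSlope (k + 3) r γ).abs).ennreal_ofReal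
  rw [lintegral_toSphere_inner_inner hE he he' hee' hslope, ofReal_angularIntegral k hr₀ hr₁]
  congr 1
  rw [← lintegral_const_mul' _ _ ENNReal.ofReal_ne_top]
  refine lintegral_congr fun φ ↦ ?_
  have hκ : 0 < (1 - r) / (1 + r) := by positivity
  rw [setLIntegral_Ioo_zero_pi_eq_dilatedAngle hκ, ← lintegral_const_mul' _ _ ENNReal.ofReal_ne_top]
  refine setLIntegral_congr_fun measurableSet_Ioo fun θ hθ ↦ ?_
  have hψ : 0 ≤ sin (dilatedAngle ((1 - r) / (1 + r)) θ) :=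
    (sin_pos_of_mem_Ioo (image_dilatedAngle hκ ▸ Set.mem_image_of_mem _ hθ)).le
  have hpointwise := congrArg ENNReal.ofReal
    (deriv_dilatedAngle_mul_poissonKernelSlope (k + 1) hr₀ hr₁ γ φ hθ rfl rfl)
  rw [ENNReal.ofReal_mul (by positivity), ENNReal.ofReal_mul (by positivity),
    ENNReal.ofReal_mul (by positivity)] at hpointwise
  calc _ = ENNReal.ofReal (sin φ ^ k) * _ := mul_left_comm _ _ _
    _ = _ := by rw [hpointwise, mul_left_comm]

theorem integral_toSphere_abs_poissonKernelSlope {k : ℕ}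
    (hE : finrank ℝ E = k + 3) {e e' : E} (he : ‖e‖ = 1) (he' : ‖e'‖ = 1) (hee' : ⟪e, e'⟫ = 0)
    (hr₀ : 0 ≤ r) (hr₁ : r < 1) (γ : ℝ) :
    ∫ ω : sphere (0 : E) 1, |poissonKernelSlope (k + 3) r γ ⟪e, ω⟫ ⟪e', ω⟫|
        ∂(volume : Measure E).toSphere =
      sphereArea (k + 1) * (2 ^ (k + 2) / ((1 - r) * (1 + r) ^ (k + 2)) *
        angularIntegral (k + 3) r γ) := by
  have : 0 < 1 - r := by linarith
  have hmeas : Measurable fun ω : sphere (0 : E) 1 ↦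
      poissonKernelSlope (k + 3) r γ ⟪e, ω⟫ ⟪e', ω⟫ :=
    (measurable_poissonKernelSlope (k + 3) r γ).comp
      (by fun_prop : Measurable fun ω : sphere (0 : E) 1 ↦ (⟪e, (ω : E)⟫, ⟪e', (ω : E)⟫))
  rw [integral_eq_lintegral_of_nonneg_ae (ae_of_all _ fun _ ↦ abs_nonneg _)
      hmeas.abs.aestronglyMeasurable,
    lintegral_toSphere_abs_poissonKernelSlope hE he he' hee' hr₀ hr₁, ENNReal.toReal_mul,
    ENNReal.toReal_mul, ENNReal.toReal_ofReal (sphereArea_pos k.succ_pos).le,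
    ENNReal.toReal_ofReal (by positivity), ENNReal.toReal_ofReal (angularIntegral_nonneg _ _ _)]

end SphereIntegral

end AngularIntegral

section PoissonKernelIntegrability

variable {E : Type*} [NormedAddCommGroup E] {R : ℝ} {x : E}

theorem norm_sub_pos_of_mem_sphere (hx : ‖x‖ < R) (y : sphere (0 : E) R) : 0 < ‖(y : E) - x‖ := by
  have hy : ‖(y : E)‖ = R := by simp
  linarith [norm_sub_norm_le (y : E) x]

theorem integrable_poissonKernel_mul [ProperSpace E] [MeasurableSpace E] [BorelSpace E]
    {μ : Measure (sphere (0 : E) R)} (n : ℕ) (hx : ‖x‖ < R) {g : sphere (0 : E) R → ℝ}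
    (hg : Integrable g μ) :
    Integrable (fun y : sphere (0 : E) R ↦ (R ^ 2 - ‖x‖ ^ 2) / ‖(y : E) - x‖ ^ n * g y) μ := by
  have hcont : Continuous fun y : sphere (0 : E) R ↦ (R ^ 2 - ‖x‖ ^ 2) / ‖(y : E) - x‖ ^ n :=
    continuous_const.div (by fun_prop) fun y ↦ (pow_pos (norm_sub_pos_of_mem_sphere hx y) n).ne'
  obtain ⟨C, hC⟩ := isCompact_univ.exists_bound_of_continuousOn hcont.continuousOn
  exact hg.bdd_mul hcont.aestronglyMeasurable (ae_of_all _ fun y ↦ hC y (Set.mem_univ y))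

end PoissonKernelIntegrability

section PoissonKernel

variable {E : Type*} [NormedAddCommGroup E] [InnerProductSpace ℝ E]

/-- The gradient at `x` of the unnormalised Poisson kernel
`x ↦ (R ^ 2 - ‖x‖ ^ 2) / ‖y - x‖ ^ n`. -/
def poissonKernelGradient (n : ℕ) (R : ℝ) (x y : E) : E :=
  (-2 / ‖y - x‖ ^ n) • x + (n * (R ^ 2 - ‖x‖ ^ 2) / ‖y - x‖ ^ (n + 2)) • (y - x)

theorem hasFDerivAt_poissonKernel (n : ℕ) (R : ℝ) {x y : E} (hxy : y ≠ x) :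
    HasFDerivAt (fun x ↦ (R ^ 2 - ‖x‖ ^ 2) / ‖y - x‖ ^ n)
      (innerSL ℝ (poissonKernelGradient n R x y)) x := by
  have hdist : 0 < ‖y - x‖ := norm_sub_pos_iff.2 hxy
  have hnum : HasFDerivAt (fun x : E ↦ R ^ 2 - ‖x‖ ^ 2) (-(2 • innerSL ℝ x)) x :=
    (hasStrictFDerivAt_norm_sq x).hasFDerivAt.const_sub _
  have hnorm : HasFDerivAt (fun x : E ↦ ‖y - x‖) (-(‖y - x‖⁻¹ • innerSL ℝ (y - x))) x := by
    have hsqrt := ((hasFDerivAt_id x).const_sub y).norm_sq.sqrt (by simp [hdist.ne'])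
    simp only [id, sqrt_sq (norm_nonneg _)] at hsqrt
    refine hsqrt.congr_fderiv (ContinuousLinearMap.ext fun v ↦ ?_)
    simp only [one_div, mul_inv_rev, map_sub, ContinuousLinearMap.comp_neg,
      ContinuousLinearMap.comp_id, neg_sub, smul_apply, sub_apply, coe_innerSL_apply,
      nsmul_eq_mul, Nat.cast_ofNat, smul_eq_mul, neg_apply]
    field_simp
    ring
  have hpow : HasDerivAt (fun s : ℝ ↦ (s ^ n)⁻¹) (-(n / ‖y - x‖ ^ (n + 1))) ‖y - x‖ := by
    refine ((hasDerivAt_pow n ‖y - x‖).inv (by positivity)).congr_deriv ?_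
    cases n with
    | zero => simp
    | succ n =>
      rw [Nat.add_sub_cancel]
      field_simp
      ring
  simp only [div_eq_mul_inv]
  refine (hnum.mul (hpow.comp_hasFDerivAt x hnorm)).congr_fderiv
    (ContinuousLinearMap.ext fun v ↦ ?_)
  simp only [poissonKernelGradient, map_add, map_sub, map_smul, smul_neg, neg_smul, neg_neg,
    Function.comp_apply, add_apply, smul_apply, sub_apply, neg_apply, coe_innerSL_apply,
    smul_eq_mul, nsmul_eq_mul, Nat.cast_ofNat]
  field_simp
  ring

theorem exists_norm_poissonKernelGradient_le [ProperSpace E] (n : ℕ) {ρ R : ℝ} (hρ : ρ < R) :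
    ∃ C, ∀ x ∈ closedBall (0 : E) ρ, ∀ y ∈ sphere (0 : E) R,
      ‖poissonKernelGradient n R x y‖ ≤ C := by
  have hdist : ∀ p ∈ closedBall (0 : E) ρ ×ˢ sphere (0 : E) R, ‖p.2 - p.1‖ ≠ 0 := by
    rintro ⟨x, y⟩ ⟨hx, hy⟩ h
    obtain rfl : y = x := by simpa [sub_eq_zero] using h
    simp_all [hρ.not_ge]
  have hcont : ContinuousOn (fun p : E × E ↦ poissonKernelGradient n R p.1 p.2)
      (closedBall 0 ρ ×ˢ sphere 0 R) :=
    ((continuousOn_const.div (by fun_prop) fun p hp ↦ pow_ne_zero _ (hdist p hp)).smul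
      (by fun_prop)).add
    ((ContinuousOn.div (by fun_prop) (by fun_prop) fun p hp ↦ pow_ne_zero _ (hdist p hp)).smul
      (by fun_prop))
  obtain ⟨C, hC⟩ := ((isCompact_closedBall _ _).prod
    (isCompact_sphere _ _)).exists_bound_of_continuousOn hcont
  exact ⟨C, fun x hx y hy ↦ hC (x, y) ⟨hx, hy⟩⟩

@[fun_prop]
theorem measurable_poissonKernelGradient [MeasurableSpace E] [BorelSpace E]
    [SecondCountableTopology E] (n : ℕ) (R : ℝ) (x : E) :
    Measurable (poissonKernelGradient n R x) := by
  unfold poissonKernelGradient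
  fun_prop

theorem norm_sub_smul_sq_of_norm_eq_one {e ω : E} (he : ‖e‖ = 1) (hω : ‖ω‖ = 1) (r : ℝ) :
    ‖ω - r • e‖ ^ 2 = 1 - 2 * r * ⟪e, ω⟫ + r ^ 2 := by
  rw [norm_sub_sq_real, hω, norm_smul, he, inner_smul_right, real_inner_comm, norm_eq_abs,
    mul_one, sq_abs]
  ring

theorem inner_poissonKernelGradient (n : ℕ) {R r : ℝ} (hR : 0 < R) (hr₀ : 0 ≤ r) (hr₁ : r < 1)
    {e e' ω : E} (he : ‖e‖ = 1) (hω : ‖ω‖ = 1) (hee' : ⟪e, e'⟫ = 0) (γ : ℝ) :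
    ⟪poissonKernelGradient n R ((R * r) • e) (R • ω), e + γ • e'⟫ =
      R / R ^ n * poissonKernelSlope n r γ ⟪e, ω⟫ ⟪e', ω⟫ := by
  have hnorm : ‖(R * r) • e‖ = R * r := by
    rw [norm_smul, he, norm_of_nonneg (by positivity), mul_one]
  have hdist : ‖R • ω - (R * r) • e‖ = R * ‖ω - r • e‖ := by
    rw [mul_smul, ← smul_sub, norm_smul, norm_of_nonneg hR.le]
  have hpos : 0 < ‖ω - r • e‖ := by
    have := norm_sub_norm_le ω (r • e)
    rw [hω, norm_smul, he, norm_of_nonneg hr₀] at this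
    linarith
  rw [poissonKernelSlope, ← norm_sub_smul_sq_of_norm_eq_one he hω, sqrt_sq (norm_nonneg _),
    poissonKernelGradient, hdist, hnorm]
  simp only [inner_add_left, inner_add_right, inner_smul_left, inner_smul_right, inner_sub_left,
    real_inner_self_eq_norm_sq, he, hee', real_inner_comm _ ω, RCLike.conj_to_real]
  field_simp
  ring

section Integral

variable [ProperSpace E] [MeasurableSpace E] [BorelSpace E] {R : ℝ} {x : E}
  {μ : Measure (sphere (0 : E) R)}

theorem integrable_poissonKernelGradient [IsFiniteMeasure μ] (n : ℕ) (hx : ‖x‖ < R) :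
    Integrable (fun y : sphere (0 : E) R ↦ poissonKernelGradient n R x y) μ := by
  obtain ⟨C, hC⟩ := exists_norm_poissonKernelGradient_le (E := E) n hx
  exact .of_bound (by fun_prop : Measurable _).aestronglyMeasurable C
    (ae_of_all _ fun y ↦ hC x (by simp) y y.2)

theorem hasGradientAt_integral_poissonKernel (n : ℕ) (hx : ‖x‖ < R) {g : sphere (0 : E) R → ℝ}
    (hg : Integrable g μ) :
    HasGradientAt (fun x ↦ ∫ y, (R ^ 2 - ‖x‖ ^ 2) / ‖(y : E) - x‖ ^ n * g y ∂μ)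
      (∫ y, g y • poissonKernelGradient n R x (y : E) ∂μ) x := by
  obtain ⟨ρ, hxρ, hρR⟩ := exists_between hx
  obtain ⟨C, hC⟩ := exists_norm_poissonKernelGradient_le (E := E) n hρR
  have hmem : ball (0 : E) ρ ∈ nhds x := isOpen_ball.mem_nhds (by simpa using hxρ)
  have hmeas : AEStronglyMeasurable (fun y ↦ g y • poissonKernelGradient n R x (y : E)) μ :=
    hg.aestronglyMeasurable.smul (by fun_prop : Measurable _).aestronglyMeasurable
  have hbound (y : sphere (0 : E) R) (z : E) (hz : z ∈ ball 0 ρ) :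
      ‖g y • poissonKernelGradient n R z (y : E)‖ ≤ |g y| * C := by
    rw [norm_smul, norm_eq_abs]
    gcongr
    exact hC z (ball_subset_closedBall hz) y y.2
  have hint : Integrable (fun y ↦ g y • poissonKernelGradient n R x (y : E)) μ :=
    (hg.abs.mul_const C).mono' hmeas (ae_of_all _ fun y ↦ hbound y x (by simpa using hxρ))
  rw [hasGradientAt_iff_hasFDerivAt]
  refine (hasFDerivAt_integral_of_dominated_of_fderiv_le (𝕜 := ℝ)
    (F := fun z (y : sphere (0 : E) R) ↦ (R ^ 2 - ‖z‖ ^ 2) / ‖(y : E) - z‖ ^ n * g y)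
    (F' := fun z y ↦ innerSL ℝ (g y • poissonKernelGradient n R z (y : E)))
    (bound := fun y ↦ |g y| * C) hmem ?_ (integrable_poissonKernel_mul n hx hg) ?_ ?_
    (hg.abs.mul_const C) ?_).congr_fderiv ?_
  · refine .of_forall fun z ↦ AEStronglyMeasurable.mul ?_ hg.aestronglyMeasurable
    exact (by fun_prop : Measurable _).aestronglyMeasurable
  · exact (innerSL ℝ (E := E)).continuous.comp_aestronglyMeasurable hmeas
  · exact ae_of_all _ fun y z hz ↦ (innerSL_apply_norm ℝ _).trans_le (hbound y z hz)
  · refine ae_of_all _ fun y z hz ↦ ?_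
    have hyz : (y : E) ≠ z := norm_sub_pos_iff.1
      (norm_sub_pos_of_mem_sphere ((mem_ball_zero_iff.1 hz).trans hρR) y)
    simpa using (hasFDerivAt_poissonKernel n R hyz).mul_const (g y)
  · exact (innerSL ℝ (E := E)).integral_comp_comm hint

end Integral

end PoissonKernel

section Duality

variable {α E : Type*} [MeasurableSpace α] {μ : Measure α} [NormedAddCommGroup E]
  [InnerProductSpace ℝ E]

theorem exists_unit_eq_norm_smul [Nontrivial E] (x : E) : ∃ e : E, ‖e‖ = 1 ∧ x = ‖x‖ • e := by
  rcases eq_or_ne x 0 with rfl | hx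
  · obtain ⟨e, he⟩ := exists_norm_eq E zero_le_one
    exact ⟨e, he, by simp⟩
  · exact ⟨‖x‖⁻¹ • x, norm_smul_inv_norm hx, by simp [smul_smul, hx]⟩

theorem norm_le_of_forall_abs_inner_le [Nontrivial E] {D : Set E} (hD : Dense D) {w : E} {c : ℝ}
    (h : ∀ v ∈ D, |⟪w, v⟫| ≤ c * ‖v‖) : ‖w‖ ≤ c := by
  have hall (v : E) : |⟪w, v⟫| ≤ c * ‖v‖ :=
    (isClosed_le (f := fun v ↦ |⟪w, v⟫|) (g := fun v ↦ c * ‖v‖) (by fun_prop)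
      (by fun_prop)).closure_subset_iff.2 h (hD v)
  obtain ⟨e, he, hwe⟩ := exists_unit_eq_norm_smul w
  have hinner : ⟪w, e⟫ = ‖w‖ := by
    rw [hwe, inner_smul_left, real_inner_self_eq_norm_sq, he, norm_smul, he]
    simp
  simpa [hinner, he] using hall e

theorem exists_measurable_abs_le_one_mul_eq_abs {f : α → ℝ} (hf : AEMeasurable f μ) :
    ∃ g : α → ℝ, Measurable g ∧ (∀ y, |g y| ≤ 1) ∧ ∀ᵐ y ∂μ, g y * f y = |f y| := by
  refine ⟨fun y ↦ if 0 ≤ hf.mk f y then 1 else -1,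
    .ite (measurableSet_le measurable_const hf.measurable_mk) measurable_const measurable_const,
    fun y ↦ by dsimp only; split_ifs <;> simp, ?_⟩
  filter_upwards [hf.ae_eq_mk] with y hy
  rw [hy]
  split_ifs with hpos
  · rw [one_mul, abs_of_nonneg hpos]
  · rw [neg_one_mul, abs_of_neg (not_le.1 hpos)]

theorem inner_integral_smul [CompleteSpace E] {K : α → E} {g : α → ℝ}
    (hgK : Integrable (fun y ↦ g y • K y) μ) (v : E) :
    ⟪∫ y, g y • K y ∂μ, v⟫ = ∫ y, g y * ⟪K y, v⟫ ∂μ := by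
  rw [real_inner_comm, ← integral_inner hgK]
  simp only [inner_smul_right, real_inner_comm]

theorem forall_norm_integral_smul_le_iff [CompleteSpace E] [Nontrivial E] {K : α → E}
    (hK : Integrable K μ) {D : Set E} (hD : Dense D) {c : ℝ} :
    (∀ g : α → ℝ, Measurable g → (∀ᵐ y ∂μ, |g y| ≤ 1) → ‖∫ y, g y • K y ∂μ‖ ≤ c) ↔
      ∀ v ∈ D, ∫ y, |⟪K y, v⟫| ∂μ ≤ c * ‖v‖ := by
  have hsmul {g : α → ℝ} (hg : Measurable g) (hg₁ : ∀ᵐ y ∂μ, |g y| ≤ 1) :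
      Integrable (fun y ↦ g y • K y) μ := hK.bdd_smul 1 hg.aestronglyMeasurable hg₁
  constructor
  · intro h v _
    obtain ⟨g, hg, hg₁, hgK⟩ :=
      exists_measurable_abs_le_one_mul_eq_abs (hK.inner_const v).aestronglyMeasurable.aemeasurable
    calc ∫ y, |⟪K y, v⟫| ∂μ = ⟪∫ y, g y • K y ∂μ, v⟫ := by
          rw [inner_integral_smul (hsmul hg (ae_of_all _ hg₁)), integral_congr_ae hgK]
      _ ≤ ‖∫ y, g y • K y ∂μ‖ * ‖v‖ := real_inner_le_norm _ _
      _ ≤ c * ‖v‖ := by gcongr; exact h g hg (ae_of_all _ hg₁)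
  · intro h g hg hg₁
    refine norm_le_of_forall_abs_inner_le hD fun v hv ↦ le_trans ?_ (h v hv)
    rw [inner_integral_smul (hsmul hg hg₁), ← norm_eq_abs]
    refine norm_integral_le_of_norm_le (hK.inner_const v).abs ?_
    filter_upwards [hg₁] with y hy
    rw [norm_mul]
    exact mul_le_of_le_one_left (abs_nonneg _) hy

end Duality

section Directions

variable {E : Type*} [NormedAddCommGroup E] [InnerProductSpace ℝ E] {e e' v : E}

theorem dense_setOf_inner_ne_zero (he : e ≠ 0) : Dense {v | ⟪e, v⟫ ≠ 0} := by
  have hcompl : {v | ⟪e, v⟫ ≠ 0} = ((ℝ ∙ e)ᗮ : Set E)ᶜ := by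
    ext v
    simp [Submodule.mem_orthogonal_singleton_iff_inner_right]
  rw [hcompl, ← interior_eq_empty_iff_dense_compl, ← Set.not_nonempty_iff_eq_empty]
  intro hinterior
  have htop := Submodule.eq_top_of_nonempty_interior' _ hinterior
  simp [he] at htop

theorem norm_add_smul_of_inner_eq_zero (he : ‖e‖ = 1) (he' : ‖e'‖ = 1) (hee' : ⟪e, e'⟫ = 0)
    (γ : ℝ) : ‖e + γ • e'‖ = √(1 + γ ^ 2) := by
  rw [eq_comm, sqrt_eq_iff_eq_sq (by positivity) (norm_nonneg _), norm_add_sq_real, he,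
    inner_smul_right, hee', norm_smul, he', norm_eq_abs, mul_one, sq_abs]
  ring

theorem exists_unit_orthogonal_eq_norm_smul {k : ℕ} (hE : finrank ℝ E = k + 2) (he : ‖e‖ = 1)
    (hv : ⟪e, v⟫ = 0) : ∃ e' : E, ‖e'‖ = 1 ∧ ⟪e, e'⟫ = 0 ∧ v = ‖v‖ • e' := by
  have : Nontrivial (ℝ ∙ e)ᗮ :=
    Module.nontrivial_of_finrank_pos (R := ℝ) (by rw [finrank_orthogonal_span_unit hE he]; simp)
  obtain ⟨e', he', hve'⟩ := exists_unit_eq_norm_smul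
    (⟨v, Submodule.mem_orthogonal_singleton_iff_inner_right.2 hv⟩ : (ℝ ∙ e)ᗮ)
  exact ⟨e', he', Submodule.mem_orthogonal_singleton_iff_inner_right.1 e'.2,
    congrArg Subtype.val hve'⟩

theorem exists_eq_inner_smul_add_smul {k : ℕ} (hE : finrank ℝ E = k + 2) (he : ‖e‖ = 1)
    (hv : ⟪e, v⟫ ≠ 0) :
    ∃ (e' : E) (γ : ℝ), ‖e'‖ = 1 ∧ ⟪e, e'⟫ = 0 ∧ 0 ≤ γ ∧ v = ⟪e, v⟫ • (e + γ • e') := by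
  have horth : ⟪e, ⟪e, v⟫⁻¹ • v - e⟫ = 0 := by
    rw [inner_sub_right, inner_smul_right, inv_mul_cancel₀ hv, real_inner_self_eq_norm_sq, he]
    norm_num
  obtain ⟨e', he', hee', hve'⟩ := exists_unit_orthogonal_eq_norm_smul hE he horth
  refine ⟨e', ‖⟪e, v⟫⁻¹ • v - e‖, he', hee', norm_nonneg _, ?_⟩
  rw [← hve', add_sub_cancel, smul_inv_smul₀ hv]

end Directions

section SphereMeasureR

variable {n : ℕ} {R : ℝ} (hR : 0 < R)

instance : IsFiniteMeasure (sphereMeasureR n R hR) := by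
  have := (volume : Measure (Eu n)).toSphere.smul_finite
    (ENNReal.ofReal_ne_top (r := R ^ (n - 1)))
  unfold sphereMeasureR
  infer_instance

theorem integral_sphereMeasureR {f : sphere (0 : Eu n) R → ℝ}
    (hf : AEStronglyMeasurable f (sphereMeasureR n R hR)) :
    ∫ y, f y ∂sphereMeasureR n R hR =
      R ^ (n - 1) * ∫ ω, f (sphereScale n R hR ω) ∂(volume : Measure (Eu n)).toSphere := by
  have hscale : Measurable (sphereScale n R hR) := Measurable.subtype_mk (by fun_prop)
  unfold sphereMeasureR at hf ⊢
  rw [integral_map hscale.aemeasurable hf, integral_smul_measure,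
    ENNReal.toReal_ofReal (by positivity), smul_eq_mul]

/-- The gradient at `x` of the Poisson kernel `(R ^ 2 - ‖x‖ ^ 2) / (ωₙ R ‖y - x‖ ^ n)` of the ball
of radius `R` in `ℝⁿ`. -/
def ballPoissonKernelGradient (R : ℝ) (x y : Eu n) : Eu n :=
  (1 / (sphereArea n * R)) • poissonKernelGradient n R x y

variable {x : Eu n}

theorem integrable_ballPoissonKernelGradient (hx : ‖x‖ < R) :
    Integrable (fun y : sphere (0 : Eu n) R ↦ ballPoissonKernelGradient R x y)
      (sphereMeasureR n R hR) :=
  (integrable_poissonKernelGradient n hx).smul (1 / (sphereArea n * R))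

theorem gradient_poissonBallR (hx : ‖x‖ < R) {g : sphere (0 : Eu n) R → ℝ}
    (hg : Integrable g (sphereMeasureR n R hR)) :
    gradient (poissonBallR R hR g) x =
      ∫ y, g y • ballPoissonKernelGradient R x y ∂sphereMeasureR n R hR := by
  have hgrad := (hasGradientAt_integral_poissonKernel n hx hg).hasFDerivAt.const_mul
    (1 / (sphereArea n * R))
  simp only [ballPoissonKernelGradient, smul_comm (g _), integral_smul]
  refine HasGradientAt.gradient (hgrad.congr_fderiv ?_)
  simp

theorem exists_forall_norm_gradient_poissonBallR_le (hx : ‖x‖ < R) :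
    ∃ c, ∀ g : sphere (0 : Eu n) R → ℝ, Measurable g →
      (∀ᵐ y ∂sphereMeasureR n R hR, |g y| ≤ 1) →
      ‖gradient (poissonBallR R hR g) x‖ ≤ c := by
  refine ⟨∫ y : sphere (0 : Eu n) R, ‖ballPoissonKernelGradient R x y‖
    ∂sphereMeasureR n R hR, fun g hg hg₁ ↦ ?_⟩
  rw [gradient_poissonBallR hR hx (.of_bound hg.aestronglyMeasurable 1 hg₁)]
  refine norm_integral_le_of_norm_le (integrable_ballPoissonKernelGradient hR hx).norm ?_
  filter_upwards [hg₁] with y hy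
  rw [norm_smul]
  exact mul_le_of_le_one_left (norm_nonneg _) hy

theorem abs_inner_ballPoissonKernelGradient_sphereScale (hn : 0 < n) {r : ℝ} (hr₀ : 0 ≤ r)
    (hr₁ : r < 1) {e e' : Eu n} (he : ‖e‖ = 1) (hee' : ⟪e, e'⟫ = 0) (γ : ℝ)
    (ω : sphere (0 : Eu n) 1) :
    |⟪ballPoissonKernelGradient R ((R * r) • e) (sphereScale n R hR ω : Eu n), e + γ • e'⟫| =
      1 / (sphereArea n * R ^ n) * |poissonKernelSlope n r γ ⟪e, ω⟫ ⟪e', ω⟫| := by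
  have harea := sphereArea_pos hn
  have hscale : 1 / (sphereArea n * R) * (R / R ^ n) = 1 / (sphereArea n * R ^ n) := by field_simp
  rw [ballPoissonKernelGradient, real_inner_smul_left, sphereScale,
    inner_poissonKernelGradient n hR hr₀ hr₁ he (norm_eq_of_mem_sphere ω) hee', ← mul_assoc,
    hscale, abs_mul, abs_of_pos (by positivity)]

end SphereMeasureR

section SharpCoefficient

/-- The factor in front of the supremum in the definition of `KcoefR`. -/
def gradientPrefactor (n : ℕ) (R ρ : ℝ) : ℝ :=
  2 ^ (n - 2) * ((n : ℝ) - 2) * R ^ (n - 1) / (π * (R + ρ) ^ (n - 1) * (R - ρ))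

theorem KcoefR_eq (n : ℕ) (R ρ : ℝ) :
    KcoefR n R ρ = gradientPrefactor n R ρ *
      ⨆ γ ∈ Set.Ici (0 : ℝ), 1 / √(1 + γ ^ 2) * angularIntegral n (ρ / R) γ :=
  rfl

variable {k : ℕ} {R : ℝ}

theorem gradientPrefactor_pos {ρ : ℝ} (hρ₀ : 0 ≤ ρ) (hρ : ρ < R) :
    0 < gradientPrefactor (k + 3) R ρ := by
  have : 0 < R - ρ := by linarith
  have : (0 : ℝ) < (k + 3 : ℕ) - 2 := by push_cast; linarith [k.cast_nonneg (α := ℝ)]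
  have : 0 < R := by linarith
  unfold gradientPrefactor
  positivity

variable (hR : 0 < R) {x e e' : Eu (k + 3)}

theorem integral_abs_inner_ballPoissonKernelGradient (hx : ‖x‖ < R) (hxe : x = ‖x‖ • e)
    (he : ‖e‖ = 1) (he' : ‖e'‖ = 1) (hee' : ⟪e, e'⟫ = 0) (γ : ℝ) :
    ∫ y : sphere (0 : Eu (k + 3)) R, |⟪ballPoissonKernelGradient R x y, e + γ • e'⟫|
        ∂sphereMeasureR (k + 3) R hR =
      gradientPrefactor (k + 3) R ‖x‖ * angularIntegral (k + 3) (‖x‖ / R) γ := by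
  obtain ⟨r, hr⟩ : ∃ r, ‖x‖ = R * r := ⟨‖x‖ / R, by field_simp⟩
  have hr₀ : 0 ≤ r := nonneg_of_mul_nonneg_right (hr ▸ norm_nonneg x) hR
  have hr₁ : r < 1 := by rwa [hr, mul_lt_iff_lt_one_right hR] at hx
  have hpointwise := abs_inner_ballPoissonKernelGradient_sphereScale hR (n := k + 3) (by omega)
    hr₀ hr₁ he hee' γ
  rw [← hr, ← hxe] at hpointwise
  rw [integral_sphereMeasureR hR
    ((integrable_ballPoissonKernelGradient hR hx).inner_const _).abs.aestronglyMeasurable]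
  simp only [hpointwise]
  rw [integral_const_mul, integral_toSphere_abs_poissonKernelSlope (by simp) he he' hee' hr₀ hr₁,
    sphereArea_add_two k.succ_pos, hr, gradientPrefactor, mul_div_cancel_left₀ _ hR.ne',
    ← mul_one_add, ← mul_one_sub, mul_pow]
  have := sphereArea_pos k.succ_pos
  have : 0 < 1 - r := by linarith
  push_cast
  field_simp
  ring

theorem integral_abs_inner_ballPoissonKernelGradient_le_iff (hx : ‖x‖ < R) (hxe : x = ‖x‖ • e)
    (he : ‖e‖ = 1) (he' : ‖e'‖ = 1) (hee' : ⟪e, e'⟫ = 0) {a : ℝ} (ha : a ≠ 0) (γ c : ℝ) :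
    ∫ y : sphere (0 : Eu (k + 3)) R, |⟪ballPoissonKernelGradient R x y, a • (e + γ • e')⟫|
        ∂sphereMeasureR (k + 3) R hR ≤ c * ‖a • (e + γ • e')‖ ↔
      gradientPrefactor (k + 3) R ‖x‖ *
        (1 / √(1 + γ ^ 2) * angularIntegral (k + 3) (‖x‖ / R) γ) ≤ c := by
  have hsqrt : 0 < √(1 + γ ^ 2) := by positivity
  simp only [inner_smul_right, abs_mul, integral_const_mul, norm_smul, norm_eq_abs]
  rw [integral_abs_inner_ballPoissonKernelGradient hR hx hxe he he' hee',
    norm_add_smul_of_inner_eq_zero he he' hee', mul_left_comm c,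
    mul_le_mul_iff_of_pos_left (abs_pos.2 ha), ← div_le_iff₀ hsqrt, one_div, mul_left_comm,
    ← div_eq_inv_mul]

theorem forall_integral_abs_inner_ballPoissonKernelGradient_le_iff (hx : ‖x‖ < R)
    (hxe : x = ‖x‖ • e) (he : ‖e‖ = 1) (c : ℝ) :
    (∀ v ∈ {v | ⟪e, v⟫ ≠ 0}, ∫ y : sphere (0 : Eu (k + 3)) R,
        |⟪ballPoissonKernelGradient R x y, v⟫| ∂sphereMeasureR (k + 3) R hR ≤ c * ‖v‖) ↔
      ∀ γ ≥ 0, gradientPrefactor (k + 3) R ‖x‖ *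
        (1 / √(1 + γ ^ 2) * angularIntegral (k + 3) (‖x‖ / R) γ) ≤ c := by
  have hfinrank : finrank ℝ (Eu (k + 3)) = k + 1 + 2 := by simp
  constructor
  · intro h γ _
    obtain ⟨e', he', hee', -⟩ :=
      exists_unit_orthogonal_eq_norm_smul hfinrank he (inner_zero_right e)
    refine (integral_abs_inner_ballPoissonKernelGradient_le_iff hR hx hxe he he' hee'
      one_ne_zero γ c).1 (h _ ?_)
    simp [inner_add_right, inner_smul_right, hee', he]
  · intro h v hv
    obtain ⟨e', γ, he', hee', hγ, hvγ⟩ := exists_eq_inner_smul_add_smul hfinrank he hv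
    rw [hvγ]
    exact (integral_abs_inner_ballPoissonKernelGradient_le_iff hR hx hxe he he' hee' hv γ c).2
      (h γ hγ)

end SharpCoefficient

-- Pitfall: in `ℝ` the inner supremum takes the junk value `0` when `i ∉ s`.
theorem isLUB_image_biSup_of_nonneg {ι : Type*} {s : Set ι} {f : ι → ℝ} (hs : s.Nonempty)
    (hf₀ : ∀ i ∈ s, 0 ≤ f i) (hbdd : BddAbove (f '' s)) : IsLUB (f '' s) (⨆ i ∈ s, f i) := by
  obtain ⟨c, hc⟩ := hbdd
  rw [mem_upperBounds, Set.forall_mem_image] at hc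
  have hc₀ : 0 ≤ c := (hf₀ _ hs.some_mem).trans (hc hs.some_mem)
  constructor
  · rintro _ ⟨i, hi, rfl⟩
    refine le_ciSup_of_le ⟨c, ?_⟩ i (by simp [hi])
    rintro _ ⟨j, rfl⟩
    exact Real.iSup_le (fun hj ↦ hc hj) hc₀
  · intro b hb
    have hb₀ : 0 ≤ b := (hf₀ _ hs.some_mem).trans (hb ⟨_, hs.some_mem, rfl⟩)
    exact Real.iSup_le (fun i ↦ Real.iSup_le (fun hi ↦ hb ⟨i, hi, rfl⟩) hb₀) hb₀

section SharpConstant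

variable {k : ℕ} {R : ℝ} (hR : 0 < R) {x : Eu (k + 3)}

theorem forall_norm_gradient_poissonBallR_le_iff (hx : ‖x‖ < R) (c : ℝ) :
    (∀ g : sphere (0 : Eu (k + 3)) R → ℝ, Measurable g →
        (∀ᵐ y ∂sphereMeasureR (k + 3) R hR, |g y| ≤ 1) →
        ‖gradient (poissonBallR R hR g) x‖ ≤ c) ↔
      ∀ γ ≥ 0, gradientPrefactor (k + 3) R ‖x‖ *
        (1 / √(1 + γ ^ 2) * angularIntegral (k + 3) (‖x‖ / R) γ) ≤ c := by
  obtain ⟨e, he, hxe⟩ := exists_unit_eq_norm_smul x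
  have hdense : Dense {v | ⟪e, v⟫ ≠ 0} :=
    dense_setOf_inner_ne_zero (norm_ne_zero_iff.1 (he ▸ one_ne_zero))
  rw [← forall_integral_abs_inner_ballPoissonKernelGradient_le_iff hR hx hxe he,
    ← forall_norm_integral_smul_le_iff (integrable_ballPoissonKernelGradient hR hx) hdense]
  refine forall₃_congr fun g hg hg₁ ↦ ?_
  rw [gradient_poissonBallR hR hx (.of_bound hg.aestronglyMeasurable 1 hg₁)]

theorem isLUB_KcoefR (hx : ‖x‖ < R) :
    IsLUB ((fun γ ↦ gradientPrefactor (k + 3) R ‖x‖ *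
        (1 / √(1 + γ ^ 2) * angularIntegral (k + 3) (‖x‖ / R) γ)) '' Set.Ici 0)
      (KcoefR (k + 3) R ‖x‖) := by
  have hR : 0 < R := (norm_nonneg x).trans_lt hx
  have hprefactor := gradientPrefactor_pos (k := k) (norm_nonneg x) hx
  obtain ⟨c, hc⟩ := exists_forall_norm_gradient_poissonBallR_le hR hx
  rw [forall_norm_gradient_poissonBallR_le_iff hR hx] at hc
  have hlub := isLUB_image_biSup_of_nonneg Set.nonempty_Ici
    (f := fun γ ↦ 1 / √(1 + γ ^ 2) * angularIntegral (k + 3) (‖x‖ / R) γ)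
    (fun γ _ ↦ mul_nonneg (by positivity) (angularIntegral_nonneg _ _ _))
    ⟨c / gradientPrefactor (k + 3) R ‖x‖, Set.forall_mem_image.2 fun γ hγ ↦
      (le_div_iff₀' hprefactor).2 (hc γ hγ)⟩
  simpa only [KcoefR_eq, Set.image_image] using hlub.mul_left hprefactor.le

end SharpConstant

/-- For `n ≥ 3`, `R > 0` and `x` in the open ball `𝔹_R ⊂ ℝⁿ`, the
smallest constant `c` such that `|∇u(x)| ≤ c ‖g‖_{L^∞(∂𝔹_R)}` for every Poisson
integral `u` of `g ∈ L^∞(∂𝔹_R)` (equivalently, such that `|∇u(x)| ≤ c` whenever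
`‖g‖_∞ ≤ 1`) equals `𝒦_{n,R}(x)` as given by the double-integral formula. -/
theorem sharp_gradient_coefficient_ball_radius
    (n : ℕ) (hn : 3 ≤ n) (R : ℝ) (hR : 0 < R)
    (x : Eu n) (hx : x ∈ Metric.ball (0 : Eu n) R) :
    IsLeast {c : ℝ |
        ∀ g : Metric.sphere (0 : Eu n) R → ℝ, Measurable g →
          (∀ᵐ y ∂(sphereMeasureR n R hR), |g y| ≤ 1) →
          ‖gradient (poissonBallR R hR g) x‖ ≤ c}
      (KcoefR n R ‖x‖) := by
  obtain ⟨k, rfl⟩ : ∃ k, n = k + 3 := ⟨n - 3, by omega⟩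
  have hx' : ‖x‖ < R := mem_ball_zero_iff.1 hx
  have hbound := forall_norm_gradient_poissonBallR_le_iff hR hx'
  have hlub := isLUB_KcoefR hx'
  refine ⟨(hbound _).2 fun γ hγ ↦ hlub.1 ⟨γ, hγ, rfl⟩, fun c hc ↦ hlub.2 ?_⟩
  exact Set.forall_mem_image.2 ((hbound c).1 hc)
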